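/- arXiv:2309.16897 — 3 statements merged into one kernel-verified Lean document; each statement's English description precedes it below -/
import Mathlib

section
/- There is a universal constant c > 0 such that the following holds. Let G be a finite simple graph with n vertices, m ≥ 2 edges, and average degree d = 2m/n, and let ε ∈ (0,1). Then there exist a subset S of the vertices and a partition S = V₁ ∪ ⋯ ∪ V_T such that: (a) the total number of edges of G lying inside the parts, Σ_{i=1}^T e(G[V_i]), is at least (1−ε)m; (b) every vertex of S has degree at least εd/3 in the induced subgraph G[S]; and (c) for each i ∈ [T], writing L_i for the Laplacian of G[V_i] and D_i for the diagonal matrix, indexed by V_i, whose entries are the degrees of the vertices in G[S], every vector z ∈ ℝ^{V_i} orthogonal to D_i^{1/2}·1 satisfies zᵀ D_i^{−1/2} L_i D_i^{−1/2} z ≥ (c·ε²/log² m)·‖z‖². -/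
open Finset SimpleGraph Matrix
open scoped Classical

/-- The Laplacian of the single edge `{a,b}`: `(χ_a − χ_b)(χ_a − χ_b)ᵀ`,
as a symmetric function of the unordered pair. -/
noncomputable def edgeLapSym2 {n : ℕ} : Sym2 (Fin n) → Matrix (Fin n) (Fin n) ℝ :=
  Sym2.lift ⟨fun a b => Matrix.of fun i j =>
      ((if i = a then (1 : ℝ) else 0) - (if i = b then 1 else 0)) *
        ((if j = a then (1 : ℝ) else 0) - (if j = b then 1 else 0)),
    fun a b => by ext i j; simp only [Matrix.of_apply]; ring⟩

/-!
A set `S` maximizing `e(S) - t |S|` has minimum degree at least `t` in `G[S]`, and `t = ε d / 3`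
loses at most `ε d n / 3` edges. Write `vol` for the sum of the degrees in `G[S]`, and take a
partition of `S` minimizing `∑ i, (κ vol(V i) log vol(V i) - e(V i))`, where `κ` is of order
`ε / log m`. Comparison with the trivial partition shows that at most `O(κ m log m)` edges are cut.
Splitting `V i` further into `A` and a larger rest lowers the first term by at least
`κ vol(A) log 2`, so minimality forces `A` to have at least that many edges to the rest of `V i`.
Hence every part has conductance of order `ε / log m`, and Cheeger's inequality turns this into the
spectral gap. Volumes are taken in `G[S]` rather than in `G[V i]` throughout; Cheeger's inequality
survives since they dominate the degrees.
-/

section Cheeger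

open MeasureTheory

variable {V : Type*} {a : V → V → ℝ} {w : V → ℝ} {U : Finset V} {φ : ℝ}

/-- The total weight of the pairs in `A × C` in the graph with weighted adjacency matrix `a`.
The pairs are ordered, so that an edge inside `A ∩ C` counts twice. -/
def edgeWeight (a : V → V → ℝ) (A C : Finset V) : ℝ :=
  ∑ u ∈ A, ∑ v ∈ C, a u v

/-- The Dirichlet energy of `y` on the weighted graph induced on `U`. The sum is over ordered pairs,
so that it is twice the Laplacian quadratic form. -/
def dirichletEnergy (a : V → V → ℝ) (U : Finset V) (y : V → ℝ) : ℝ :=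
  ∑ u ∈ U, ∑ v ∈ U, a u v * (y u - y v) ^ 2

lemma sum_sum_mul_swap (ha : ∀ u v, a u v = a v u) (U : Finset V) (f : V → V → ℝ) :
    ∑ u ∈ U, ∑ v ∈ U, a u v * f u v = ∑ u ∈ U, ∑ v ∈ U, a u v * f v u := by
  rw [sum_comm]
  exact sum_congr rfl fun u _ => sum_congr rfl fun v _ => by rw [ha]

lemma sum_sum_mul_abs_sub (ha : ∀ u v, a u v = a v u) (g : V → ℝ) :
    ∑ u ∈ U, ∑ v ∈ U, a u v * |g u - g v| = 2 * ∑ u ∈ U, ∑ v ∈ U, a u v * (g u - g v)⁺ := by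
  have hswap : ∑ u ∈ U, ∑ v ∈ U, a u v * (g u - g v)⁻ =
      ∑ u ∈ U, ∑ v ∈ U, a u v * (g u - g v)⁺ := by
    rw [sum_sum_mul_swap ha]
    simp only [← posPart_neg, neg_sub]
  simp only [← posPart_add_negPart, mul_add, sum_add_distrib, hswap, two_mul]

lemma mul_sum_abs_sq_sub_sq_le (ha : ∀ u v, a u v = a v u) (ha0 : ∀ u v, 0 ≤ a u v)
    (hw : ∀ v ∈ U, ∑ u ∈ U, a v u ≤ w v) (φ : ℝ) (p : V → ℝ) :
    φ * ∑ u ∈ U, ∑ v ∈ U, a u v * |p u ^ 2 - p v ^ 2| ≤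
      dirichletEnergy a U p + φ ^ 2 * ∑ v ∈ U, w v * p v ^ 2 := by
  have hamgm (x y : ℝ) : φ * |x ^ 2 - y ^ 2| ≤ (x - y) ^ 2 + φ ^ 2 / 2 * (x ^ 2 + y ^ 2) := by
    rw [sq_sub_sq, abs_mul, ← sq_abs (x - y)]
    nlinarith [sq_nonneg (|x - y| - φ / 2 * |x + y|), sq_abs (x + y), sq_nonneg (φ * (x - y))]
  have hdeg : ∑ u ∈ U, ∑ v ∈ U, a u v * p u ^ 2 ≤ ∑ v ∈ U, w v * p v ^ 2 := by
    simp only [← sum_mul]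
    exact sum_le_sum fun u hu => mul_le_mul_of_nonneg_right (hw u hu) (sq_nonneg _)
  have hswap : ∑ u ∈ U, ∑ v ∈ U, a u v * p v ^ 2 = ∑ u ∈ U, ∑ v ∈ U, a u v * p u ^ 2 :=
    sum_sum_mul_swap ha U fun _ v => p v ^ 2
  calc φ * ∑ u ∈ U, ∑ v ∈ U, a u v * |p u ^ 2 - p v ^ 2|
      = ∑ u ∈ U, ∑ v ∈ U, a u v * (φ * |p u ^ 2 - p v ^ 2|) := by
        simp only [mul_sum, mul_left_comm]
    _ ≤ ∑ u ∈ U, ∑ v ∈ U, a u v * ((p u - p v) ^ 2 + φ ^ 2 / 2 * (p u ^ 2 + p v ^ 2)) := by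
        gcongr with u _ v _
        exacts [ha0 u v, hamgm _ _]
    _ = dirichletEnergy a U p + φ ^ 2 / 2 *
          (∑ u ∈ U, ∑ v ∈ U, a u v * p u ^ 2 + ∑ u ∈ U, ∑ v ∈ U, a u v * p v ^ 2) := by
        simp only [dirichletEnergy, mul_add, sum_add_distrib, mul_sum, mul_left_comm]
    _ ≤ dirichletEnergy a U p + φ ^ 2 * ∑ v ∈ U, w v * p v ^ 2 := by
        rw [hswap]
        nlinarith [mul_le_mul_of_nonneg_left hdeg (sq_nonneg φ)]

lemma exists_weighted_median (hw : ∀ v ∈ U, 0 ≤ w v) (y : V → ℝ) :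
    ∃ t : ℝ, 2 * ∑ v ∈ U with t < y v, w v ≤ ∑ v ∈ U, w v ∧
      2 * ∑ v ∈ U with y v < t, w v ≤ ∑ v ∈ U, w v := by
  rcases U.eq_empty_or_nonempty with rfl | hU
  · simp
  set C := U.filter fun x => 2 * ∑ v ∈ U with y x < y v, w v ≤ ∑ v ∈ U, w v
  obtain ⟨M, hMU, hM⟩ := U.exists_max_image y hU
  have hMC : M ∈ C := by
    have hempty : (U.filter fun v => y M < y v) = ∅ :=
      filter_eq_empty_iff.2 fun v hv => not_lt.2 (hM v hv)
    exact mem_filter.2 ⟨hMU, by simpa [hempty] using sum_nonneg hw⟩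
  obtain ⟨x, hxC, hx⟩ := C.exists_min_image y ⟨M, hMC⟩
  refine ⟨y x, (mem_filter.1 hxC).2, ?_⟩
  rcases (U.filter fun v => y v < y x).eq_empty_or_nonempty with hempty | hne
  · simpa [hempty] using sum_nonneg hw
  obtain ⟨x', hx', hmax⟩ := exists_max_image _ y hne
  obtain ⟨hx'U, hlt⟩ := mem_filter.1 hx'
  have hlarge : ∑ v ∈ U, w v < 2 * ∑ v ∈ U with y x' < y v, w v :=
    not_le.1 fun h => (hx x' (mem_filter.2 ⟨hx'U, h⟩)).not_gt hlt
  have hcompl : (U.filter fun v => y x' < y v) = U.filter fun v => ¬ y v < y x :=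
    filter_congr fun v hv => ⟨fun h h' => (hmax v (mem_filter.2 ⟨hv, h'⟩)).not_gt h,
      fun h => hlt.trans_le (not_lt.1 h)⟩
  rw [hcompl] at hlarge
  linarith [sum_filter_add_sum_filter_not U (fun v => y v < y x) w]

lemma posPart_mul_negPart_eq_zero (x : ℝ) : x⁺ * x⁻ = 0 := by
  rcases le_total 0 x with hx | hx
  · rw [negPart_of_nonneg hx, mul_zero]
  · rw [posPart_of_nonpos hx, zero_mul]

lemma posPart_sq_add_negPart_sq (x : ℝ) : x⁺ ^ 2 + x⁻ ^ 2 = x ^ 2 := by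
  conv_rhs => rw [← posPart_sub_negPart x]
  linear_combination 2 * posPart_mul_negPart_eq_zero x

lemma posPart_sub_sq_add_negPart_sub_sq_le (x y : ℝ) :
    (x⁺ - y⁺) ^ 2 + (x⁻ - y⁻) ^ 2 ≤ (x - y) ^ 2 := by
  conv_rhs => rw [← posPart_sub_negPart x, ← posPart_sub_negPart y]
  nlinarith [posPart_mul_negPart_eq_zero x, posPart_mul_negPart_eq_zero y,
    mul_nonneg (posPart_nonneg x) (negPart_nonneg y),
    mul_nonneg (posPart_nonneg y) (negPart_nonneg x)]

lemma dirichletEnergy_posPart_add_negPart_le (ha0 : ∀ u v, 0 ≤ a u v) (f : V → ℝ) :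
    dirichletEnergy a U (fun v => (f v)⁺) + dirichletEnergy a U (fun v => (f v)⁻) ≤
      dirichletEnergy a U f := by
  simp only [dirichletEnergy, ← sum_add_distrib, ← mul_add]
  exact sum_le_sum fun u _ => sum_le_sum fun v _ =>
    mul_le_mul_of_nonneg_left (posPart_sub_sq_add_negPart_sub_sq_le _ _) (ha0 u v)

lemma sum_mul_sq_le_sum_mul_sub_sq (hw : ∀ v ∈ U, 0 ≤ w v) {y : V → ℝ}
    (hy : ∑ v ∈ U, w v * y v = 0) (t : ℝ) :
    ∑ v ∈ U, w v * y v ^ 2 ≤ ∑ v ∈ U, w v * (y v - t) ^ 2 := by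
  have hexpand : ∑ v ∈ U, w v * (y v - t) ^ 2 =
      ∑ v ∈ U, w v * y v ^ 2 - 2 * t * ∑ v ∈ U, w v * y v + t ^ 2 * ∑ v ∈ U, w v := by
    rw [mul_sum, mul_sum, ← sum_sub_distrib, ← sum_add_distrib]
    exact sum_congr rfl fun v _ => by ring
  rw [hexpand, hy]
  linarith [mul_nonneg (sq_nonneg t) (sum_nonneg hw)]

/-- The weighted graph induced on `U` has conductance at least `φ`, where the volume of a set is its
total vertex weight `w`: the subsets of at most half the volume expand by a factor `φ`. -/
def HasConductance [DecidableEq V] (a : V → V → ℝ) (w : V → ℝ) (U : Finset V) (φ : ℝ) : Prop :=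
  ∀ A ⊆ U, 2 * ∑ v ∈ A, w v ≤ ∑ v ∈ U, w v → φ * ∑ v ∈ A, w v ≤ edgeWeight a A (U \ A)

variable [DecidableEq V]

lemma HasConductance.superlevel_le (hφ : HasConductance a w U φ) (hw : ∀ v ∈ U, 0 ≤ w v)
    {g : V → ℝ} (hsupp : 2 * ∑ v ∈ U with 0 < g v, w v ≤ ∑ v ∈ U, w v) {t : ℝ} (ht : 0 ≤ t) :
    φ * ∑ v ∈ U with t < g v, w v ≤ ∑ u ∈ U, ∑ v ∈ U, if g v ≤ t ∧ t < g u then a u v else 0 := by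
  have hsub : (U.filter fun v => t < g v) ⊆ U.filter fun v => 0 < g v :=
    monotone_filter_right U fun _ _ => ht.trans_lt
  have hsmall : ∑ v ∈ U with t < g v, w v ≤ ∑ v ∈ U with 0 < g v, w v :=
    sum_le_sum_of_subset_of_nonneg hsub fun v hv _ => hw v (mem_filter.1 hv).1
  refine (hφ _ (filter_subset _ U) (by linarith)).trans_eq ?_
  simp only [edgeWeight, ← filter_not, not_lt, sum_filter, ite_and]
  refine sum_congr rfl fun u _ => ?_
  split_ifs <;> simp

-- Coarea: integrate the expansion of the superlevel sets `{v | t < g v}` over `t ≥ 0`.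
lemma HasConductance.mul_sum_le_sum_posPart_sub (hφ : HasConductance a w U φ)
    (ha0 : ∀ u v, 0 ≤ a u v) (hw : ∀ v ∈ U, 0 ≤ w v) {g : V → ℝ} (hg : ∀ v, 0 ≤ g v)
    (hsupp : 2 * ∑ v ∈ U with 0 < g v, w v ≤ ∑ v ∈ U, w v) :
    φ * ∑ v ∈ U, w v * g v ≤ ∑ u ∈ U, ∑ v ∈ U, a u v * (g u - g v)⁺ := by
  set χ : ℝ → ℝ → ℝ → ℝ := fun x y => (Set.Ico x y).indicator 1
  have hχ_apply (x y t : ℝ) : χ x y t = if x ≤ t ∧ t < y then 1 else 0 := by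
    simp [χ, Set.indicator_apply]
  have hχ_integrable (x y : ℝ) : Integrable (χ x y) :=
    (integrable_indicator_iff measurableSet_Ico).2 (integrableOn_const (by simp))
  have hχ_integral (x y : ℝ) : ∫ t, χ x y t = (y - x)⁺ := by
    rw [integral_indicator_one measurableSet_Ico, Real.volume_real_Ico, posPart_def]
  have hlevel (t : ℝ) : φ * ∑ v ∈ U, w v * χ 0 (g v) t ≤
      ∑ u ∈ U, ∑ v ∈ U, a u v * χ (g v) (g u) t := by
    rcases lt_or_ge t 0 with ht | ht
    · have hlhs : φ * ∑ v ∈ U, w v * χ 0 (g v) t = 0 := by simp [hχ_apply, ht.not_ge]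
      rw [hlhs]
      exact sum_nonneg fun u _ => sum_nonneg fun v _ => mul_nonneg (ha0 u v)
        (Set.indicator_nonneg (fun _ _ => zero_le_one) t)
    · simpa [hχ_apply, ht, ← sum_filter] using hφ.superlevel_le hw hsupp ht
  calc φ * ∑ v ∈ U, w v * g v = ∫ t, φ * ∑ v ∈ U, w v * χ 0 (g v) t := by
        rw [integral_const_mul, integral_finsetSum _ fun v _ => (hχ_integrable _ _).const_mul _]
        simp [integral_const_mul, hχ_integral, hg]
    _ ≤ ∫ t, ∑ u ∈ U, ∑ v ∈ U, a u v * χ (g v) (g u) t := by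
        refine integral_mono ?_ ?_ hlevel
        · exact (integrable_finsetSum _ fun v _ => (hχ_integrable _ _).const_mul _).const_mul _
        · exact integrable_finsetSum _ fun u _ => integrable_finsetSum _ fun v _ =>
            (hχ_integrable _ _).const_mul _
    _ = ∑ u ∈ U, ∑ v ∈ U, a u v * (g u - g v)⁺ := by
        rw [integral_finsetSum _ fun u _ => integrable_finsetSum _ fun v _ =>
          (hχ_integrable _ _).const_mul _]
        refine sum_congr rfl fun u _ => ?_
        rw [integral_finsetSum _ fun v _ => (hχ_integrable _ _).const_mul _]
        simp only [integral_const_mul, hχ_integral]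

lemma HasConductance.sq_mul_sum_le_dirichletEnergy_of_support (hφ : HasConductance a w U φ)
    (hφ0 : 0 ≤ φ) (ha : ∀ u v, a u v = a v u) (ha0 : ∀ u v, 0 ≤ a u v)
    (hw : ∀ v ∈ U, ∑ u ∈ U, a v u ≤ w v) {p : V → ℝ} (hp : ∀ v, 0 ≤ p v)
    (hsupp : 2 * ∑ v ∈ U with 0 < p v, w v ≤ ∑ v ∈ U, w v) :
    φ ^ 2 * ∑ v ∈ U, w v * p v ^ 2 ≤ dirichletEnergy a U p := by
  have hw0 : ∀ v ∈ U, 0 ≤ w v := fun v hv => (sum_nonneg fun u _ => ha0 v u).trans (hw v hv)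
  have hsq (v : V) : 0 < p v ^ 2 ↔ 0 < p v := sq_pos_iff.trans (hp v).lt_iff_ne'.symm
  have hcoarea : 2 * (φ * ∑ v ∈ U, w v * p v ^ 2) ≤
      ∑ u ∈ U, ∑ v ∈ U, a u v * |p u ^ 2 - p v ^ 2| := by
    rw [sum_sum_mul_abs_sub ha fun v => p v ^ 2]
    have := hφ.mul_sum_le_sum_posPart_sub ha0 hw0 (fun v => sq_nonneg (p v))
      (by simpa only [hsq] using hsupp)
    linarith
  have := mul_sum_abs_sq_sub_sq_le ha ha0 hw φ p
  linarith [mul_le_mul_of_nonneg_left hcoarea hφ0]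

-- Centre `y` at a weighted median, so that the positive and the negative part have small support.
lemma HasConductance.sq_mul_sum_le_dirichletEnergy (hφ : HasConductance a w U φ) (hφ0 : 0 ≤ φ)
    (ha : ∀ u v, a u v = a v u) (ha0 : ∀ u v, 0 ≤ a u v) (hw : ∀ v ∈ U, ∑ u ∈ U, a v u ≤ w v)
    {y : V → ℝ} (hy : ∑ v ∈ U, w v * y v = 0) :
    φ ^ 2 * ∑ v ∈ U, w v * y v ^ 2 ≤ dirichletEnergy a U y := by
  have hw0 : ∀ v ∈ U, 0 ≤ w v := fun v hv => (sum_nonneg fun u _ => ha0 v u).trans (hw v hv)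
  obtain ⟨t, hpos, hneg⟩ := exists_weighted_median hw0 y
  set f : V → ℝ := fun v => y v - t
  have hfpos := hφ.sq_mul_sum_le_dirichletEnergy_of_support hφ0 ha ha0 hw
    (fun v => posPart_nonneg (f v)) (by simpa [f] using hpos)
  have hfneg := hφ.sq_mul_sum_le_dirichletEnergy_of_support hφ0 ha ha0 hw
    (fun v => negPart_nonneg (f v)) (by simpa [f] using hneg)
  calc φ ^ 2 * ∑ v ∈ U, w v * y v ^ 2
      ≤ φ ^ 2 * ∑ v ∈ U, w v * f v ^ 2 :=
        mul_le_mul_of_nonneg_left (sum_mul_sq_le_sum_mul_sub_sq hw0 hy t) (sq_nonneg φ)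
    _ = φ ^ 2 * ∑ v ∈ U, w v * (f v)⁺ ^ 2 + φ ^ 2 * ∑ v ∈ U, w v * (f v)⁻ ^ 2 := by
        simp only [← mul_add, ← sum_add_distrib, posPart_sq_add_negPart_sq]
    _ ≤ dirichletEnergy a U (fun v => (f v)⁺) + dirichletEnergy a U (fun v => (f v)⁻) :=
        add_le_add hfpos hfneg
    _ ≤ dirichletEnergy a U f := dirichletEnergy_posPart_add_negPart_le ha0 f
    _ = dirichletEnergy a U y := by simp only [dirichletEnergy, f, sub_sub_sub_cancel_right]

-- The right-hand side is twice the quadratic form of `W^{-1/2} L W^{-1/2}` at `z`, where `L` is the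
-- Laplacian of the graph induced on `U` and `W` is the diagonal matrix of the vertex weights.
lemma HasConductance.sq_mul_sum_sq_le_dirichletEnergy_div_sqrt (hφ : HasConductance a w U φ)
    (hφ0 : 0 ≤ φ) (ha : ∀ u v, a u v = a v u) (ha0 : ∀ u v, 0 ≤ a u v)
    (hw : ∀ v ∈ U, ∑ u ∈ U, a v u ≤ w v) (hwpos : ∀ v ∈ U, 0 < w v) {z : V → ℝ}
    (hz : ∑ v ∈ U, z v * √(w v) = 0) :
    φ ^ 2 * ∑ v ∈ U, z v ^ 2 ≤ dirichletEnergy a U fun v => z v / √(w v) := by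
  have hcentred : ∑ v ∈ U, w v * (z v / √(w v)) = 0 := by
    rw [← hz]
    exact sum_congr rfl fun v _ => by rw [mul_div_left_comm, Real.div_sqrt]
  have hnorm : ∑ v ∈ U, w v * (z v / √(w v)) ^ 2 = ∑ v ∈ U, z v ^ 2 :=
    sum_congr rfl fun v hv => by
      rw [div_pow, Real.sq_sqrt (hwpos v hv).le, mul_div_cancel₀ _ (hwpos v hv).ne']
  rw [← hnorm]
  exact hφ.sq_mul_sum_le_dirichletEnergy hφ0 ha ha0 hw hcentred

end Cheeger

section Decomposition

variable {V : Type*} {a : V → V → ℝ}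

lemma edgeWeight_comm (ha : ∀ u v, a u v = a v u) (A C : Finset V) :
    edgeWeight a A C = edgeWeight a C A := by
  rw [edgeWeight, sum_comm]
  exact sum_congr rfl fun v _ => sum_congr rfl fun u _ => ha u v

lemma edgeWeight_self_mono (ha0 : ∀ u v, 0 ≤ a u v) {A U : Finset V} (hA : A ⊆ U) :
    edgeWeight a A A ≤ edgeWeight a U U :=
  (sum_le_sum fun u _ => sum_le_sum_of_subset_of_nonneg hA fun v _ _ => ha0 u v).trans
    (sum_le_sum_of_subset_of_nonneg hA fun u _ _ => sum_nonneg fun v _ => ha0 u v)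

lemma edgeWeight_self_eq_of_subset [DecidableEq V] (ha : ∀ u v, a u v = a v u) {A U : Finset V}
    (hA : A ⊆ U) :
    edgeWeight a U U =
      edgeWeight a A A + edgeWeight a (U \ A) (U \ A) + 2 * edgeWeight a A (U \ A) := by
  have hsplit : edgeWeight a U U = edgeWeight a A A + edgeWeight a (U \ A) A +
      (edgeWeight a A (U \ A) + edgeWeight a (U \ A) (U \ A)) := by
    simp only [edgeWeight, ← sum_sdiff hA, sum_add_distrib]
    ring
  rw [hsplit, edgeWeight_comm ha (U \ A) A]
  ring

-- Compare the maximizer `S` of `e(S) - t |S|` with `S \ {v}` and with the whole vertex set.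
lemma exists_minDegree_ge_and_edgeWeight_ge [Fintype V] (ha : ∀ u v, a u v = a v u)
    (ha0 : ∀ v, 0 ≤ a v v) (t : ℝ) :
    ∃ S : Finset V, (∀ v ∈ S, t ≤ ∑ u ∈ S, a v u) ∧
      edgeWeight a univ univ - 2 * t * (Fintype.card V - S.card) ≤ edgeWeight a S S := by
  obtain ⟨S, -, hS⟩ := (univ : Finset (Finset V)).exists_max_image
    (fun S => edgeWeight a S S - 2 * t * S.card) univ_nonempty
  refine ⟨S, fun v hv => ?_, ?_⟩
  · have hv' : {v} ⊆ S := singleton_subset_iff.2 hv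
    have hdelete := hS (S \ {v}) (mem_univ _)
    have hcard : ((S \ {v}).card : ℝ) = S.card - 1 := by
      rw [cast_card_sdiff hv', card_singleton, Nat.cast_one]
    have hdegree : ∑ u ∈ S, a v u = a v v + edgeWeight a {v} (S \ {v}) := by
      simp [edgeWeight, ← sum_sdiff hv', add_comm]
    have hloop : edgeWeight a {v} {v} = a v v := by simp [edgeWeight]
    rw [edgeWeight_self_eq_of_subset ha hv', hcard, hloop] at hdelete
    linarith [ha0 v]
  · have huniv := hS univ (mem_univ _)
    rw [card_univ] at huniv
    linarith

lemma sum_filter_piecewise_eq [DecidableEq V] {ι : Type*} [Fintype ι] [DecidableEq ι]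
    {F : Finset V → ℝ} (hF : F ∅ = 0) {S A : Finset V} {P : V → ι} {i j : ι}
    (hA : A ⊆ S.filter (P · = i)) (hij : i ≠ j) (hj : ∀ v ∈ S, P v ≠ j) :
    ∑ k, F (S.filter (A.piecewise (fun _ => j) P · = k)) =
      ∑ k, F (S.filter (P · = k)) - F (S.filter (P · = i)) + F A + F (S.filter (P · = i) \ A) := by
  set Q := A.piecewise (fun _ => j) P
  have hQA {v : V} (hv : v ∈ A) : Q v = j := piecewise_eq_of_mem _ _ _ hv
  have hQP {v : V} (hv : v ∉ A) : Q v = P v := piecewise_eq_of_notMem _ _ _ hv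
  have hAS {v : V} (hv : v ∈ A) : v ∈ S ∧ P v = i := mem_filter.1 (hA hv)
  have hclass_i : S.filter (Q · = i) = S.filter (P · = i) \ A := by
    ext v
    by_cases hv : v ∈ A <;> simp [hv, hQA, hQP, hij.symm]
  have hclass_j : S.filter (Q · = j) = A := by
    ext v
    by_cases hv : v ∈ A
    · simp [hv, hQA, hAS]
    · simpa [hv, hQP] using hj v
  have hclass_old : S.filter (P · = j) = ∅ := filter_eq_empty_iff.2 hj
  have hclass_other {k : ι} (hk : k ≠ i ∧ k ≠ j) : S.filter (Q · = k) = S.filter (P · = k) := by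
    refine filter_congr fun v _ => ?_
    by_cases hv : v ∈ A
    · simp [hQA hv, (hAS hv).2, hk.1.symm, hk.2.symm]
    · rw [hQP hv]
  have hdiff : ∑ k, (F (S.filter (Q · = k)) - F (S.filter (P · = k))) =
      F (S.filter (P · = i) \ A) - F (S.filter (P · = i)) + F A := by
    rw [Fintype.sum_eq_add i j hij fun k hk => by rw [hclass_other hk, sub_self],
      hclass_i, hclass_j, hclass_old, hF, sub_zero]
  rw [sum_sub_distrib] at hdiff
  linarith

-- With `|S| + 1` colors some color is free, so a minimizer of `∑ i, F (V i)` can be refined.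
lemma exists_coloring_le_add [Finite V] [DecidableEq V] {F : Finset V → ℝ} (hF : F ∅ = 0)
    (S : Finset V) :
    ∃ P : V → Fin (S.card + 1), ∑ i, F (S.filter (P · = i)) ≤ F S ∧
      ∀ i, ∀ A ⊆ S.filter (P · = i), F (S.filter (P · = i)) ≤ F A + F (S.filter (P · = i) \ A) := by
  obtain ⟨P, hP⟩ := Finite.exists_min
    fun P : V → Fin (S.card + 1) => ∑ i, F (S.filter (P · = i))
  refine ⟨P, (hP fun _ => 0).trans_eq ?_, fun i A hA => ?_⟩
  · rw [Fintype.sum_eq_single 0 fun i hi => by simp [hi.symm, hF]]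
    simp
  rcases A.eq_empty_or_nonempty with rfl | ⟨x, hx⟩
  · simp [hF]
  obtain ⟨j, -, hj⟩ := exists_mem_notMem_of_card_lt_card
    (s := S.image P) (t := univ) (by simpa using Nat.lt_succ_of_le card_image_le)
  have hfree : ∀ v ∈ S, P v ≠ j := fun v hv h => hj (mem_image.2 ⟨v, hv, h⟩)
  obtain ⟨hxS, rfl⟩ := mem_filter.1 (hA hx)
  have hmin := hP (A.piecewise (fun _ => j) P)
  rw [sum_filter_piecewise_eq hF hA (hfree x hxS) hfree] at hmin
  linarith

lemma mul_log_two_le_mul_log_sub {x y : ℝ} (hx : 0 ≤ x) (hxy : x ≤ y) :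
    x * Real.log 2 ≤ (x + y) * Real.log (x + y) - x * Real.log x - y * Real.log y := by
  rcases hx.eq_or_lt with rfl | hx
  · simp
  have hlogx : Real.log 2 + Real.log x ≤ Real.log (x + y) := by
    rw [← Real.log_mul two_ne_zero hx.ne']
    exact Real.log_le_log (by positivity) (by linarith)
  have hlogy : Real.log y ≤ Real.log (x + y) := Real.log_le_log (hx.trans_le hxy) (by linarith)
  linarith [mul_le_mul_of_nonneg_left hlogx hx.le,
    mul_le_mul_of_nonneg_left hlogy (hx.le.trans hxy)]

lemma sum_mul_log_le_sum_mul_log_sum {w : V → ℝ} {U : Finset V} (hw : ∀ v ∈ U, 0 ≤ w v) :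
    ∑ v ∈ U, w v * Real.log (w v) ≤ (∑ v ∈ U, w v) * Real.log (∑ v ∈ U, w v) := by
  rw [sum_mul]
  refine sum_le_sum fun v hv => ?_
  rcases (hw v hv).eq_or_lt with h0 | hpos
  · simp [← h0]
  · exact mul_le_mul_of_nonneg_left (Real.log_le_log hpos (single_le_sum hw hv)) hpos.le

lemma exists_coloring_hasConductance [Finite V] [DecidableEq V] (ha : ∀ u v, a u v = a v u)
    {w : V → ℝ} {S : Finset V} (hw : ∀ v ∈ S, 0 ≤ w v) {κ : ℝ} (hκ : 0 ≤ κ) :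
    ∃ P : V → Fin (S.card + 1),
      edgeWeight a S S - ∑ i, edgeWeight a (S.filter (P · = i)) (S.filter (P · = i)) ≤
        κ * ((∑ v ∈ S, w v) * Real.log (∑ v ∈ S, w v) - ∑ v ∈ S, w v * Real.log (w v)) ∧
      ∀ i, HasConductance a w (S.filter (P · = i)) (κ * Real.log 2 / 2) := by
  set volLog : Finset V → ℝ := fun U => (∑ v ∈ U, w v) * Real.log (∑ v ∈ U, w v) with hvolLog
  obtain ⟨P, hle, hsplit⟩ := exists_coloring_le_add
    (F := fun U => κ * volLog U - edgeWeight a U U) (by simp [hvolLog, edgeWeight]) S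
  refine ⟨P, ?_, fun i A hA hvol => ?_⟩
  · have hentropy : ∑ v ∈ S, w v * Real.log (w v) ≤ ∑ i, volLog (S.filter (P · = i)) := by
      rw [← sum_fiberwise S P]
      exact sum_le_sum fun i _ =>
        sum_mul_log_le_sum_mul_log_sum fun v hv => hw v (mem_filter.1 hv).1
    rw [sum_sub_distrib, ← mul_sum] at hle
    linarith [mul_le_mul_of_nonneg_left hentropy hκ]
  · set U := S.filter (P · = i)
    have hvolA : 0 ≤ ∑ v ∈ A, w v := sum_nonneg fun v hv => hw v (mem_filter.1 (hA hv)).1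
    have hvolU : ∑ v ∈ A, w v + ∑ v ∈ U \ A, w v = ∑ v ∈ U, w v := by
      rw [add_comm, sum_sdiff hA]
    have hgain : (∑ v ∈ A, w v) * Real.log 2 ≤ volLog U - volLog A - volLog (U \ A) := by
      simp only [hvolLog, ← hvolU]
      exact mul_log_two_le_mul_log_sub hvolA (by linarith)
    have hcut := hsplit i A hA
    rw [edgeWeight_self_eq_of_subset ha hA] at hcut
    linarith [mul_le_mul_of_nonneg_left hgain hκ]

lemma sum_mul_log_sum_sub_sum_mul_log_le {w : V → ℝ} {S : Finset V} (hw : ∀ v ∈ S, 1 ≤ w v) {m : ℝ}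
    (hm : 2 ≤ m) (hvol : ∑ v ∈ S, w v ≤ 2 * m) :
    (∑ v ∈ S, w v) * Real.log (∑ v ∈ S, w v) - ∑ v ∈ S, w v * Real.log (w v) ≤
      4 * m * Real.log m := by
  have hlogm : Real.log 2 ≤ Real.log m := Real.log_le_log two_pos hm
  have hsum0 : 0 ≤ ∑ v ∈ S, w v * Real.log (w v) :=
    sum_nonneg fun v hv => Real.mul_log_nonneg (hw v hv)
  rcases (sum_nonneg fun v hv => zero_le_one.trans (hw v hv)).eq_or_lt with h0 | hpos
  · rw [← h0, zero_mul]
    linarith [Real.mul_log_nonneg (one_le_two.trans hm)]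
  have hlog : Real.log (∑ v ∈ S, w v) ≤ 2 * Real.log m := by
    refine (Real.log_le_log hpos hvol).trans ?_
    rw [Real.log_mul two_ne_zero (by positivity)]
    linarith
  have hlog0 : 0 ≤ 2 * Real.log m := by linarith [Real.log_nonneg one_le_two]
  linarith [mul_le_mul_of_nonneg_left hlog hpos.le, mul_le_mul_of_nonneg_right hvol hlog0]

lemma one_le_sum_of_pos {f : V → ℝ} {S : Finset V} (hf : ∀ u ∈ S, f u = 0 ∨ 1 ≤ f u)
    (hpos : 0 < ∑ u ∈ S, f u) : 1 ≤ ∑ u ∈ S, f u := by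
  have hf0 : ∀ u ∈ S, 0 ≤ f u := fun u hu => (hf u hu).elim (fun h => h.ge) zero_le_one.trans
  obtain ⟨u, hu, hfu⟩ := exists_ne_zero_of_sum_ne_zero hpos.ne'
  exact ((hf u hu).resolve_left hfu).trans (single_le_sum hf0 hu)

lemma exists_minDegree_coloring_hasConductance [Fintype V] (ha : ∀ u v, a u v = a v u)
    (ha1 : ∀ u v, a u v = 0 ∨ 1 ≤ a u v) {m : ℝ} (hm : edgeWeight a univ univ = 2 * m)
    (hm2 : 2 ≤ m) {ε : ℝ} (hε : 0 < ε) :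
    ∃ (S : Finset V) (P : V → Fin (S.card + 1)),
      (1 - ε) * (2 * m) ≤ ∑ i, edgeWeight a (S.filter (P · = i)) (S.filter (P · = i)) ∧
      (∀ v ∈ S, ε * (2 * m / Fintype.card V) / 3 ≤ ∑ u ∈ S, a v u) ∧
      ∀ i, HasConductance a (fun v => ∑ u ∈ S, a v u) (S.filter (P · = i))
        (ε * Real.log 2 / (12 * Real.log m)) := by
  have ha0 (u v : V) : 0 ≤ a u v := (ha1 u v).elim (fun h => h.ge) zero_le_one.trans
  have hlog : 0 < Real.log m := Real.log_pos (by linarith)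
  have : Nonempty V := not_isEmpty_iff.1 fun _ => by
    simp only [edgeWeight, univ_eq_empty, sum_empty] at hm
    linarith
  obtain ⟨S, hdeg, hS⟩ := exists_minDegree_ge_and_edgeWeight_ge ha (fun v => ha0 v v)
    (ε * (2 * m / Fintype.card V) / 3)
  set w : V → ℝ := fun v => ∑ u ∈ S, a v u
  have hwpos : ∀ v ∈ S, 0 < w v := fun v hv => lt_of_lt_of_le (by positivity) (hdeg v hv)
  have hvol : ∑ v ∈ S, w v ≤ 2 * m := hm ▸ edgeWeight_self_mono ha0 (subset_univ S)
  have hentropy := sum_mul_log_sum_sub_sum_mul_log_le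
    (fun v hv => one_le_sum_of_pos (fun u _ => ha1 v u) (hwpos v hv)) hm2 hvol
  -- Of the `2 ε m` that may be lost, deleting vertices costs `4 ε m / 3`, which leaves
  -- `2 ε m / 3 = κ * 4 m log m` for the cut.
  have hκ : 0 ≤ ε / (6 * Real.log m) := by positivity
  obtain ⟨P, hcut, hφ⟩ := exists_coloring_hasConductance ha (fun v hv => (hwpos v hv).le) hκ
  refine ⟨S, P, ?_, hdeg, fun i => ?_⟩
  · have hκ_mul : ε / (6 * Real.log m) * (4 * m * Real.log m) = 2 * ε * m / 3 := by
      field_simp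
      ring
    have hdelete : 2 * (ε * (2 * m / Fintype.card V) / 3) * (Fintype.card V - S.card) ≤
        4 * ε * m / 3 := by
      calc 2 * (ε * (2 * m / Fintype.card V) / 3) * (Fintype.card V - S.card)
          ≤ 2 * (ε * (2 * m / Fintype.card V) / 3) * Fintype.card V := by
            gcongr
            exact sub_le_self _ (Nat.cast_nonneg _)
        _ = 4 * ε * m / 3 := by
            field_simp
            ring
    linarith [mul_le_mul_of_nonneg_left hentropy hκ]
  · convert hφ i using 1
    field_simp
    ring

theorem stmt_7_general [Fintype V] (ha : ∀ u v, a u v = a v u)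
    (ha1 : ∀ u v, a u v = 0 ∨ 1 ≤ a u v) {m : ℝ} (hm : edgeWeight a univ univ = 2 * m)
    (hm2 : 2 ≤ m) {ε : ℝ} (hε : 0 < ε) :
    ∃ (S : Finset V) (T : ℕ) (P : V → Fin T),
      (1 - ε) * (2 * m) ≤ ∑ i, edgeWeight a (S.filter (P · = i)) (S.filter (P · = i)) ∧
      (∀ v ∈ S, ε * (2 * m / Fintype.card V) / 3 ≤ ∑ u ∈ S, a v u) ∧
      ∀ (i : Fin T) (z : V → ℝ), ∑ v ∈ S with P v = i, z v * √(∑ u ∈ S, a v u) = 0 →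
        (ε * Real.log 2 / (12 * Real.log m)) ^ 2 * ∑ v ∈ S with P v = i, z v ^ 2 ≤
          dirichletEnergy a (S.filter (P · = i)) fun v => z v / √(∑ u ∈ S, a v u) := by
  have ha0 (u v : V) : 0 ≤ a u v := (ha1 u v).elim (fun h => h.ge) zero_le_one.trans
  have hlog : 0 < Real.log m := Real.log_pos (by linarith)
  obtain ⟨S, P, hedges, hdeg, hφ⟩ := exists_minDegree_coloring_hasConductance ha ha1 hm hm2 hε
  have hwpos : ∀ v ∈ S, 0 < ∑ u ∈ S, a v u := fun v hv =>
    have : Nonempty V := ⟨v⟩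
    lt_of_lt_of_le (by positivity) (hdeg v hv)
  refine ⟨S, _, P, hedges, hdeg, fun i z hz => ?_⟩
  exact (hφ i).sq_mul_sum_sq_le_dirichletEnergy_div_sqrt (by positivity) ha ha0
    (fun v _ => sum_le_sum_of_subset_of_nonneg (filter_subset _ S) fun u _ _ => ha0 v u)
    (fun v hv => hwpos v (mem_filter.1 hv).1) hz

end Decomposition

section AdjWeight

variable {V : Type*} (G : SimpleGraph V) [DecidableRel G.Adj]

/-- The weights of a simple graph, each of whose edges has weight `1`. It stands in for
`SimpleGraph.adjMatrix` where a function of two vertices is expected. -/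
def adjWeight (u v : V) : ℝ := if G.Adj u v then 1 else 0

lemma adjWeight_comm (u v : V) : adjWeight G u v = adjWeight G v u := by
  simp only [adjWeight, G.adj_comm]

lemma adjWeight_eq_zero_or_one_le (u v : V) : adjWeight G u v = 0 ∨ 1 ≤ adjWeight G u v := by
  by_cases h : G.Adj u v <;> simp [adjWeight, h]

lemma sum_adjWeight_eq_card_filter (S : Finset V) (v : V) :
    ∑ u ∈ S, adjWeight G v u = (S.filter fun u => G.Adj v u).card := by
  simp [adjWeight]

variable [Fintype V]

lemma two_mul_sum_edgeFinset (F : Sym2 V → ℝ) :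
    2 * ∑ e ∈ G.edgeFinset, F e = ∑ u, ∑ v, adjWeight G u v * F s(u, v) := by
  have hfiber : ∀ e ∈ G.edgeFinset, ∑ d : G.Dart with d.edge = e, F d.edge = 2 * F e := by
    intro e he
    rw [sum_congr rfl fun d hd => by rw [(mem_filter.1 hd).2], sum_const,
      G.dart_edge_fiber_card e (mem_edgeFinset.1 he), nsmul_eq_mul, Nat.cast_ofNat]
  have hdarts : ∑ d : G.Dart, F d.edge = ∑ p : V × V with G.Adj p.1 p.2, F s(p.1, p.2) :=
    sum_bij' (fun d _ => d.toProd) (fun p hp => ⟨p, (mem_filter.1 hp).2⟩)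
      (fun d _ => mem_filter.2 ⟨mem_univ _, d.adj⟩) (fun _ _ => mem_univ _)
      (fun _ _ => rfl) (fun _ _ => rfl) (fun _ _ => rfl)
  calc 2 * ∑ e ∈ G.edgeFinset, F e
      = ∑ e ∈ G.edgeFinset, ∑ d : G.Dart with d.edge = e, F d.edge := by
        rw [mul_sum, sum_congr rfl hfiber]
    _ = ∑ d : G.Dart, F d.edge :=
        sum_fiberwise_of_maps_to (fun d _ => mem_edgeFinset.2 d.edge_mem) _
    _ = ∑ u, ∑ v, adjWeight G u v * F s(u, v) := by
        rw [hdarts, sum_filter, Fintype.sum_prod_type]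
        simp only [adjWeight, ite_mul, one_mul, zero_mul]

lemma two_mul_sum_edgeFinset_filter (F : Sym2 V → ℝ) {U : Finset V} {p : V → Prop}
    [DecidablePred fun e : Sym2 V => ∀ v ∈ e, p v] (hU : ∀ v, v ∈ U ↔ p v) :
    2 * ∑ e ∈ G.edgeFinset with ∀ v ∈ e, p v, F e =
      ∑ u ∈ U, ∑ v ∈ U, adjWeight G u v * F s(u, v) := by
  rw [sum_filter, two_mul_sum_edgeFinset]
  simp [ite_and, ← hU]

lemma edgeWeight_adjWeight_self (U : Finset V) [DecidablePred fun e : Sym2 V => ∀ v ∈ e, v ∈ U] :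
    edgeWeight (adjWeight G) U U = 2 * (G.edgeFinset.filter fun e => ∀ v ∈ e, v ∈ U).card := by
  simpa [edgeWeight] using (two_mul_sum_edgeFinset_filter G (fun _ => 1) fun _ => Iff.rfl).symm

lemma sum_edgeWeight_adjWeight_filter_eq {ι : Type*} [Fintype ι] [DecidableEq ι] (S : Finset V)
    (P : V → ι) [DecidablePred fun e : Sym2 V => (∀ v ∈ e, v ∈ S) ∧ ∃ i, ∀ v ∈ e, P v = i] :
    ∑ i, edgeWeight (adjWeight G) (S.filter (P · = i)) (S.filter (P · = i)) =
      2 * (G.edgeFinset.filter fun e => (∀ v ∈ e, v ∈ S) ∧ ∃ i, ∀ v ∈ e, P v = i).card := by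
  have hunion : (G.edgeFinset.filter fun e => (∀ v ∈ e, v ∈ S) ∧ ∃ i, ∀ v ∈ e, P v = i) =
      univ.biUnion fun i => G.edgeFinset.filter fun e => ∀ v ∈ e, v ∈ S.filter (P · = i) := by
    ext e
    simp only [mem_filter, mem_biUnion, mem_univ, true_and, forall_and, exists_and_left]
  rw [hunion, card_biUnion, Nat.cast_sum, mul_sum]
  · exact sum_congr rfl fun i _ => edgeWeight_adjWeight_self G _
  · refine fun i _ j _ hij => disjoint_filter.2 fun e _ hi hj => hij ?_
    exact (mem_filter.1 (hi _ e.out_fst_mem)).2.symm.trans (mem_filter.1 (hj _ e.out_fst_mem)).2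

end AdjWeight

lemma dotProduct_edgeLapSym2_mulVec {n : ℕ} (y : Fin n → ℝ) (a b : Fin n) :
    y ⬝ᵥ (edgeLapSym2 s(a, b) *ᵥ y) = (y a - y b) ^ 2 := by
  set χ : Fin n → ℝ := Pi.single a 1 - Pi.single b 1
  have hrankOne : edgeLapSym2 s(a, b) = vecMulVec χ χ := by
    ext i j
    simp [edgeLapSym2, χ, vecMulVec_apply, Pi.single_apply]
  have hχ : χ ⬝ᵥ y = y a - y b := by simp [χ, sub_dotProduct]
  rw [hrankOne, vecMulVec_mulVec, dotProduct_comm]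
  simp [hχ, sq]

lemma two_mul_dotProduct_sum_edgeLapSym2_mulVec {n : ℕ} (G : SimpleGraph (Fin n))
    [DecidableRel G.Adj] {U : Finset (Fin n)} {p : Fin n → Prop}
    [DecidablePred fun e : Sym2 (Fin n) => ∀ v ∈ e, p v] (hU : ∀ v, v ∈ U ↔ p v) (y : Fin n → ℝ) :
    2 * (y ⬝ᵥ ((∑ e ∈ G.edgeFinset with ∀ v ∈ e, p v, edgeLapSym2 e) *ᵥ y)) =
      dirichletEnergy (adjWeight G) U y := by
  rw [sum_mulVec, dotProduct_sum, two_mul_sum_edgeFinset_filter G _ hU]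
  simp only [dotProduct_edgeLapSym2_mulVec, dirichletEnergy]

theorem stmt_7 : ∃ c : ℝ, 0 < c ∧
    ∀ (n : ℕ) (G : SimpleGraph (Fin n)) [DecidableRel G.Adj],
    ∀ m : ℕ, m = G.edgeFinset.card → 2 ≤ m →
    ∀ d : ℝ, d = 2 * m / n →
    ∀ ε : ℝ, ε ∈ Set.Ioo (0 : ℝ) 1 →
    ∃ (S : Finset (Fin n)) (T : ℕ) (P : Fin n → Fin T),
      -- (a) the parts `V_i = {v ∈ S : P v = i}` together contain ≥ (1−ε)m edges of G
      (1 - ε) * m ≤ ((G.edgeFinset.filter fun e =>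
          (∀ v ∈ e, v ∈ S) ∧ ∃ i, ∀ v ∈ e, P v = i).card : ℝ) ∧
      -- (b) minimum degree in G[S]
      (∀ v ∈ S, ε * d / 3 ≤ ((S.filter fun u => G.Adj v u).card : ℝ)) ∧
      -- (c) spectral gap of each part, with degrees taken in G[S] (stated variationally;
      -- vectors on `V_i` are encoded as vectors on `Fin n` supported on `V_i`)
      ∀ (i : Fin T) (z : Fin n → ℝ),
        (∀ v, ¬(v ∈ S ∧ P v = i) → z v = 0) →
        (∑ v, z v * Real.sqrt ((S.filter fun u => G.Adj v u).card : ℝ)) = 0 →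
        (c * ε ^ 2 / (Real.log m) ^ 2) * (∑ v, (z v) ^ 2) ≤
          (fun y : Fin n → ℝ => y ⬝ᵥ
              ((∑ e ∈ G.edgeFinset.filter (fun e => ∀ v ∈ e, v ∈ S ∧ P v = i),
                edgeLapSym2 e) *ᵥ y))
            (fun v => z v / Real.sqrt ((S.filter fun u => G.Adj v u).card : ℝ)) := by
  refine ⟨Real.log 2 ^ 2 / 288, by positivity, ?_⟩
  intro n G _ m hm hm2 d hd ε hε
  have hG : edgeWeight (adjWeight G) univ univ = 2 * (m : ℝ) := by
    simp [edgeWeight_adjWeight_self, hm]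
  obtain ⟨S, T, P, hedges, hdeg, hgap⟩ := stmt_7_general (adjWeight_comm G)
    (adjWeight_eq_zero_or_one_le G) hG (by exact_mod_cast hm2) hε.1
  simp only [sum_edgeWeight_adjWeight_filter_eq, sum_adjWeight_eq_card_filter,
    Fintype.card_fin, ← hd] at hedges hdeg hgap
  refine ⟨S, T, P, by linarith, hdeg, fun i z hsupp horth => ?_⟩
  have hlocal (f : Fin n → ℝ) (hf : ∀ v, z v = 0 → f v = 0) :
      ∑ v ∈ S with P v = i, f v = ∑ v, f v :=
    sum_subset (subset_univ _) fun v _ hv => hf v (hsupp v (by rwa [mem_filter] at hv))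
  have henergy := two_mul_dotProduct_sum_edgeLapSym2_mulVec G
    (U := S.filter (P · = i)) (fun _ => mem_filter)
    fun v => z v / √(S.filter fun u => G.Adj v u).card
  have hgap_i := hgap i z ((hlocal _ fun v hv => by simp [hv]).trans horth)
  rw [hlocal _ fun v hv => by simp [hv], ← henergy] at hgap_i
  have hconst : Real.log 2 ^ 2 / 288 * ε ^ 2 / Real.log m ^ 2 =
      (ε * Real.log 2 / (12 * Real.log m)) ^ 2 / 2 := by
    ring
  rw [hconst]
  linarith
end

section
/- Let n ≥ 1 and ε ∈ [0,1], and let G be a bipartite graph obtained from the complete bipartite graph K_{n,n} (with n left vertices and n right vertices) by deleting at most εn² edges. Then G has a connected component containing at least 2n(1−ε) vertices. -/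
open SimpleGraph
open scoped Classical

/-!
Choose a vertex uniformly at random. If the components of `G` have `aᵢ` left and `bᵢ` right
vertices, the component of the chosen vertex has expected size `∑ᵢ (aᵢ + bᵢ)² / (2n)`. A pair of
opposite vertices in different components is a deleted edge, so `∑ᵢ aᵢ bᵢ ≥ (1 - ε) n²`, and
`(aᵢ + bᵢ)² ≥ 4 aᵢ bᵢ` makes the expectation at least `2n (1 - ε)`.
-/

section Labels

open Finset

variable {α β C : Type*} [Fintype α] [Fintype β] [DecidableEq C]

lemma card_filter_eq_eq_sum_card_mul_card (f : α → C) (g : β → C) {T : Finset C}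
    (hf : ∀ a, f a ∈ T) :
    #{p : α × β | f p.1 = g p.2} = ∑ c ∈ T, #{a | f a = c} * #{b | g b = c} := by
  rw [card_eq_sum_card_fiberwise (f := fun p ↦ f p.1) (t := T) fun p _ ↦ hf p.1]
  refine sum_congr rfl fun c _ ↦ ?_
  rw [← card_product]
  congr 1
  ext p
  simp only [mem_filter, mem_univ, true_and, mem_product]
  grind

lemma card_filter_sum (p : α ⊕ β → Prop) [DecidablePred p] :
    #{v | p v} = #{a | p (.inl a)} + #{b | p (.inr b)} := by
  simp only [card_filter, Fintype.sum_sum_type]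

lemma four_mul_card_filter_inl_eq_inr_le (h : α ⊕ β → C) :
    4 * #{p : α × β | h (.inl p.1) = h (.inr p.2)} ≤
      #{q : (α ⊕ β) × (α ⊕ β) | h q.1 = h q.2} := by
  have label_mem (v : α ⊕ β) : h v ∈ univ.image h := mem_image_of_mem h (mem_univ v)
  calc
    _ = ∑ c ∈ univ.image h, 4 * #{a | h (.inl a) = c} * #{b | h (.inr b) = c} := by
      rw [card_filter_eq_eq_sum_card_mul_card (fun a ↦ h (.inl a)) (fun b ↦ h (.inr b))
        fun a ↦ label_mem (.inl a), mul_sum]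
      simp only [mul_assoc]
    _ ≤ ∑ c ∈ univ.image h, (#{a | h (.inl a) = c} + #{b | h (.inr b) = c}) ^ 2 :=
      sum_le_sum fun c _ ↦ four_mul_le_sq_add _ _
    _ = ∑ c ∈ univ.image h, #{v | h v = c} * #{v | h v = c} := by
      simp only [card_filter_sum, sq]
    _ = _ := (card_filter_eq_eq_sum_card_mul_card h h label_mem).symm

end Labels

section Components

variable {V α β : Type*} [Fintype V] [Fintype α] [Fintype β]

open Finset

lemma sum_ncard_reachable (G : SimpleGraph V) :
    ∑ v, {u | G.Reachable v u}.ncard =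
      #{q : V × V | G.connectedComponentMk q.1 = G.connectedComponentMk q.2} := by
  simp only [ConnectedComponent.eq, card_filter, Fintype.sum_prod_type]
  refine sum_congr rfl fun v _ ↦ ?_
  rw [← card_filter, ← Set.ncard_coe_finset, coe_filter_univ]

lemma card_filter_connectedComponentMk_ne_le_ncard_sdiff_edgeSet (G : SimpleGraph (α ⊕ β)) :
    #{p : α × β | G.connectedComponentMk (.inl p.1) ≠ G.connectedComponentMk (.inr p.2)} ≤
      ((completeBipartiteGraph α β).edgeSet \ G.edgeSet).ncard := by
  rw [← Set.ncard_coe_finset]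
  refine Set.ncard_le_ncard_of_injOn (fun p ↦ s(.inl p.1, .inr p.2)) ?_ ?_ (Set.toFinite _)
  · intro p hp
    have hne : G.connectedComponentMk (.inl p.1) ≠ G.connectedComponentMk (.inr p.2) := by
      simpa using hp
    exact ⟨by simp, fun hadj ↦ hne (ConnectedComponent.sound (Adj.reachable hadj))⟩
  · rintro ⟨a, b⟩ _ ⟨a', b'⟩ _ hedge
    simpa using hedge

lemma four_mul_card_mul_card_le_sum_ncard_reachable_add (G : SimpleGraph (α ⊕ β)) :
    4 * (Fintype.card α * Fintype.card β) ≤ ∑ v, {u | G.Reachable v u}.ncard +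
      4 * ((completeBipartiteGraph α β).edgeSet \ G.edgeSet).ncard := by
  have hsplit := card_filter_add_card_filter_not (s := (univ : Finset (α × β)))
    fun p ↦ G.connectedComponentMk (.inl p.1) = G.connectedComponentMk (.inr p.2)
  have hsame := four_mul_card_filter_inl_eq_inr_le G.connectedComponentMk
  have hdiff := card_filter_connectedComponentMk_ne_le_ncard_sdiff_edgeSet G
  rw [card_univ, Fintype.card_prod] at hsplit
  rw [sum_ncard_reachable]
  lia

theorem stmt_8_general [Nonempty (α ⊕ β)] (ε : ℝ) (G : SimpleGraph (α ⊕ β))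
    (hdel : (((completeBipartiteGraph α β).edgeSet \ G.edgeSet).ncard : ℝ) ≤
      ε * (Fintype.card α * Fintype.card β)) :
    ∃ v, 4 * (1 - ε) * (Fintype.card α * Fintype.card β) ≤
      (Fintype.card α + Fintype.card β) * ({u | G.Reachable v u}.ncard : ℝ) := by
  have hsum : 4 * (1 - ε) * (Fintype.card α * Fintype.card β) ≤
      ∑ v, ({u | G.Reachable v u}.ncard : ℝ) := by
    have hcount := four_mul_card_mul_card_le_sum_ncard_reachable_add G
    rify at hcount
    linarith
  obtain ⟨v, -, hv⟩ := exists_le_of_sum_le (s := univ) univ_nonempty <| calc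
    ∑ _v : α ⊕ β, 4 * (1 - ε) * (Fintype.card α * Fintype.card β)
      = (Fintype.card α + Fintype.card β) * (4 * (1 - ε) * (Fintype.card α * Fintype.card β)) := by
        simp
    _ ≤ (Fintype.card α + Fintype.card β) * ∑ v, ({u | G.Reachable v u}.ncard : ℝ) := by gcongr
    _ = ∑ v, (Fintype.card α + Fintype.card β) * ({u | G.Reachable v u}.ncard : ℝ) := mul_sum ..
  exact ⟨v, hv⟩

end Components

theorem stmt_8 {n : ℕ} (hn : 1 ≤ n) (ε : ℝ) (hε : ε ∈ Set.Icc (0 : ℝ) 1)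
    (G : SimpleGraph (Fin n ⊕ Fin n))
    (hsub : G ≤ completeBipartiteGraph (Fin n) (Fin n))
    (hdel : ((((completeBipartiteGraph (Fin n) (Fin n)).edgeSet \ G.edgeSet).ncard : ℝ) ≤
      ε * (n : ℝ) ^ 2)) :
    ∃ v : Fin n ⊕ Fin n, 2 * (n : ℝ) * (1 - ε) ≤ ({u | G.Reachable v u}.ncard : ℝ) := by
  have : NeZero n := ⟨by lia⟩
  obtain ⟨v, hv⟩ := stmt_8_general ε G (by simpa [sq] using hdel)
  rw [Fintype.card_fin] at hv
  have hpos : (0 : ℝ) < 2 * n := by positivity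
  exact ⟨v, le_of_mul_le_mul_left (by linarith) hpos⟩
end

section
/- Let n ≥ 4 be even and k ≥ 1, and let G be the graph on vertex set V = (ℤ/nℤ) × {1,…,k} in which (u,i) and (v,j) are adjacent if and only if v = u+1 or v = u−1 (mod n), together with one additional edge e* joining (0,1) and (n/2,1). For w ∈ ℤ/nℤ define x_w ∈ ℝ^V by x_w(u,i) = dist(u,w), the graph distance between u and w in the n-cycle, and let X = Σ_{w∈ℤ/nℤ} x_w x_wᵀ. Then: (a) X is positive semidefinite and all its diagonal entries are equal (to Σ_{v=0}^{n−1} min(v, n−v)²); (b) ⟨X, L_{G∖e*}⟩ = n²k², where G∖e* is G with the edge e* removed; (c) ⟨X, L_{e*}⟩ ≥ n³/24; consequently, if n > 24k², then ⟨X, L_{e*}⟩ > (1/2)·⟨X, L_G⟩, so the single-edge subgraph {e*} violates the relative SDP approximation ⟨X, L_H⟩ < (1/2)⟨X, L_G⟩ at this X. -/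
open Finset Matrix

/-- The Laplacian of the single edge `{a,b}`: `(χ_a − χ_b)(χ_a − χ_b)ᵀ`. -/
noncomputable def edgeLapV {V : Type} [DecidableEq V] (a b : V) : Matrix V V ℝ :=
  Matrix.of fun i j =>
    ((if i = a then (1 : ℝ) else 0) - (if i = b then 1 else 0)) *
      ((if j = a then (1 : ℝ) else 0) - (if j = b then 1 else 0))

/-- The graph distance between `u` and `w` in the `n`-cycle:
`min((u−w) mod n, (w−u) mod n)`. -/
def cycleDist {n : ℕ} [NeZero n] (u w : ZMod n) : ℕ := min (u - w).val (w - u).val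

/-!
Since `X` is a sum of squares `x_w x_wᵀ`, pairing it with the Laplacian of a single edge `{a,b}`
gives the energy `Σ_w (x_w a − x_w b)²`. An even cycle is bipartite, so the distances from `w` to
adjacent vertices differ by exactly one, and each of the `n k²` ring edges has energy `n`. The
chord joins antipodal points `0` and `n/2`, whose distances to `w` add up to `n/2`; its energy is
therefore `Σ_w (n/2 − 2 dist(0,w))² = n³/12 + 2n/3`, cubic in `n` while the ring is quadratic.
-/

section EdgeEnergy

variable {V : Type} [DecidableEq V]

theorem edgeLapV_eq_vecMulVec (a b : V) :
    edgeLapV a b =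
      vecMulVec (Pi.single a 1 - Pi.single b 1) (Pi.single a 1 - Pi.single b 1) := by
  ext i j
  simp [edgeLapV, vecMulVec_apply, Pi.single_apply]

variable [Fintype V]

theorem trace_transpose_vecMulVec_mul_edgeLapV (x : V → ℝ) (a b : V) :
    ((vecMulVec x x)ᵀ * edgeLapV a b).trace = (x a - x b) ^ 2 := by
  have hx : x ⬝ᵥ (Pi.single a 1 - Pi.single b 1) = x a - x b := by
    rw [dotProduct_sub, dotProduct_single_one, dotProduct_single_one]
  rw [edgeLapV_eq_vecMulVec, transpose_vecMulVec, vecMulVec_mul_vecMulVec, trace_vecMulVec,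
    dotProduct_smul, hx, smul_eq_mul, sq]

theorem trace_transpose_sum_vecMulVec_mul_edgeLapV {ι : Type*} (s : Finset ι)
    (x : ι → V → ℝ) (a b : V) :
    ((∑ w ∈ s, vecMulVec (x w) (x w))ᵀ * edgeLapV a b).trace = ∑ w ∈ s, (x w a - x w b) ^ 2 := by
  simp only [transpose_sum, sum_mul, trace_sum, trace_transpose_vecMulVec_mul_edgeLapV]

end EdgeEnergy

section CycleDistance

variable {n : ℕ} [NeZero n]

theorem sum_zmod_eq_sum_range_natCast_add {M : Type*} [AddCommMonoid M] (f : ZMod n → M)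
    (u : ZMod n) : ∑ w, f w = ∑ v ∈ range n, f (v + u) := by
  obtain ⟨m, rfl⟩ := Nat.exists_eq_succ_of_ne_zero (NeZero.ne n)
  calc ∑ w, f w = ∑ w, f (w + u) := (Equiv.sum_comp (Equiv.addRight u) f).symm
    _ = ∑ w : ZMod (m + 1), f ((w.val : ZMod (m + 1)) + u) := by simp only [ZMod.natCast_zmod_val]
    _ = ∑ v ∈ range (m + 1), f (v + u) :=
      Fin.sum_univ_eq_sum_range (fun v => f ((v : ZMod (m + 1)) + u)) (m + 1)

theorem exists_lt_eq_natCast_add (u w : ZMod n) : ∃ v < n, u = (v : ZMod n) + w :=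
  ⟨(u - w).val, ZMod.val_lt _, by rw [ZMod.natCast_zmod_val, sub_add_cancel]⟩

theorem cycleDist_comm (u w : ZMod n) : cycleDist u w = cycleDist w u :=
  min_comm _ _

theorem cycleDist_natCast_add_self {v : ℕ} (hv : v ≤ n) (w : ZMod n) :
    cycleDist ((v : ZMod n) + w) w = min v (n - v) := by
  rw [cycleDist, add_sub_cancel_right, sub_add_cancel_right, ZMod.neg_val']
  rcases hv.eq_or_lt with rfl | hlt
  · simp
  · rw [ZMod.val_natCast_of_lt hlt]
    rcases v.eq_zero_or_pos with rfl | hpos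
    · simp
    · rw [Nat.mod_eq_of_lt (Nat.sub_lt (NeZero.pos n) hpos)]

theorem sum_comp_cycleDist {M : Type*} [AddCommMonoid M] (g : ℕ → M) (u : ZMod n) :
    ∑ w, g (cycleDist u w) = ∑ v ∈ range n, g (min v (n - v)) := by
  rw [sum_zmod_eq_sum_range_natCast_add _ u]
  refine sum_congr rfl fun v hv => ?_
  rw [cycleDist_comm, cycleDist_natCast_add_self (mem_range.1 hv).le]

theorem cycleDist_add_one_eq_or_of_even (hn : Even n) (u w : ZMod n) :
    cycleDist (u + 1) w = cycleDist u w + 1 ∨ cycleDist u w = cycleDist (u + 1) w + 1 := by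
  obtain ⟨v, hv, rfl⟩ := exists_lt_eq_natCast_add u w
  have hnext : (v : ZMod n) + w + 1 = ((v + 1 : ℕ) : ZMod n) + w := by push_cast; ring
  rw [hnext, cycleDist_natCast_add_self hv, cycleDist_natCast_add_self hv.le]
  obtain ⟨m, hm⟩ := hn
  omega

theorem sq_cycleDist_sub_cycleDist_add_one (hn : Even n) (u w : ZMod n) :
    ((cycleDist u w : ℝ) - cycleDist (u + 1) w) ^ 2 = 1 := by
  rcases cycleDist_add_one_eq_or_of_even hn u w with h | h <;> rw [h] <;> push_cast <;> ring

theorem cycleDist_add_cycleDist_antipode (hn : Even n) (u w : ZMod n) :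
    cycleDist u w + cycleDist (u + ((n / 2 : ℕ) : ZMod n)) w = n / 2 := by
  obtain ⟨v, hv, rfl⟩ := exists_lt_eq_natCast_add u w
  have hhalf : n / 2 + n / 2 = n := by rw [← two_mul, Nat.two_mul_div_two_of_even hn]
  rcases le_total v (n / 2) with hle | hge
  · have hanti : (v : ZMod n) + w + ((n / 2 : ℕ) : ZMod n) = ((v + n / 2 : ℕ) : ZMod n) + w := by
      push_cast
      ring
    rw [hanti, cycleDist_natCast_add_self hv.le, cycleDist_natCast_add_self (by omega)]
    omega
  · have hwrap : ((n / 2 : ℕ) : ZMod n) + ((n / 2 : ℕ) : ZMod n) = 0 := by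
      rw [← Nat.cast_add, hhalf, ZMod.natCast_self]
    have hanti : (v : ZMod n) + w + ((n / 2 : ℕ) : ZMod n) = ((v - n / 2 : ℕ) : ZMod n) + w := by
      rw [Nat.cast_sub hge]
      linear_combination hwrap
    rw [hanti, cycleDist_natCast_add_self hv.le, cycleDist_natCast_add_self (by omega)]
    omega

theorem sum_range_two_mul_comp_min {M : Type*} [AddCommMonoid M] (g : ℕ → M) (m : ℕ) :
    ∑ v ∈ range (2 * m), g (min v (2 * m - v)) = ∑ t ∈ range m, (g t + g (t + 1)) := by
  have hlow {t : ℕ} (ht : t ∈ range m) : min t (m + m - t) = t := by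
    have := mem_range.1 ht
    omega
  have hhigh {t : ℕ} (ht : t ∈ range m) : min (m + t) (m + m - (m + t)) = m - 1 - t + 1 := by
    have := mem_range.1 ht
    omega
  rw [two_mul, sum_range_add, sum_add_distrib, ← sum_range_reflect fun t => g (t + 1)]
  exact congrArg₂ _ (sum_congr rfl fun t ht => by rw [hlow ht])
    (sum_congr rfl fun t ht => by rw [hhigh ht])

theorem sum_range_sq_sub_two_mul_add_sq (a : ℝ) (m : ℕ) :
    ∑ t ∈ range m, ((a - 2 * t) ^ 2 + (a - 2 * (t + 1 : ℕ)) ^ 2) =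
      2 * m * a ^ 2 - 4 * m ^ 2 * a + 4 * m * (2 * m ^ 2 + 1) / 3 := by
  induction m with
  | zero => simp
  | succ m ih => rw [sum_range_succ, ih]; push_cast; ring

theorem sum_sq_cycleDist_sub_cycleDist_antipode (hn : Even n) (u : ZMod n) :
    ∑ w, ((cycleDist u w : ℝ) - cycleDist (u + ((n / 2 : ℕ) : ZMod n)) w) ^ 2 =
      (n : ℝ) ^ 3 / 12 + 2 * n / 3 := by
  obtain ⟨m, hm⟩ := hn.two_dvd
  have hdiff (w : ZMod n) :
      (cycleDist u w : ℝ) - cycleDist (u + ((n / 2 : ℕ) : ZMod n)) w =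
        -(m - 2 * cycleDist u w) := by
    have hsum : cycleDist u w + cycleDist (u + ((n / 2 : ℕ) : ZMod n)) w = m := by
      rw [cycleDist_add_cycleDist_antipode hn]
      omega
    rw [← hsum]
    push_cast
    ring
  calc ∑ w, ((cycleDist u w : ℝ) - cycleDist (u + ((n / 2 : ℕ) : ZMod n)) w) ^ 2
      = ∑ w, ((m : ℝ) - 2 * cycleDist u w) ^ 2 := by simp only [hdiff, neg_sq]
    _ = ∑ v ∈ range n, ((m : ℝ) - 2 * (min v (n - v) : ℕ)) ^ 2 :=
      sum_comp_cycleDist (fun d => ((m : ℝ) - 2 * d) ^ 2) u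
    _ = ∑ t ∈ range m, (((m : ℝ) - 2 * t) ^ 2 + ((m : ℝ) - 2 * (t + 1 : ℕ)) ^ 2) := by
      rw [hm, sum_range_two_mul_comp_min fun d => ((m : ℝ) - 2 * d) ^ 2]
    _ = (n : ℝ) ^ 3 / 12 + 2 * n / 3 := by
      rw [sum_range_sq_sub_two_mul_add_sq, hm]
      push_cast
      ring

end CycleDistance

section Blowup

variable (n : ℕ) [NeZero n] (κ : Type)

/-- The matrix `X = Σ_w x_w x_wᵀ`, where `x_w(u,i) = dist(u,w)`, with layers indexed by `κ`. -/
def cycleDistGram : Matrix (ZMod n × κ) (ZMod n × κ) ℝ :=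
  ∑ w : ZMod n, vecMulVec (fun p => (cycleDist p.1 w : ℝ)) (fun p => (cycleDist p.1 w : ℝ))

/-- The Laplacian of the blow-up of the `n`-cycle in which every vertex is replaced by an
independent set `κ`. The edge between `(u,i)` and `(u+1,j)` is summed over all `u`, `i`, `j`, so
that each edge occurs once when `n ≥ 3`. -/
noncomputable def cycleBlowupLaplacian [Fintype κ] [DecidableEq κ] :
    Matrix (ZMod n × κ) (ZMod n × κ) ℝ :=
  ∑ u : ZMod n, ∑ i : κ, ∑ j : κ, edgeLapV (u, i) (u + 1, j)

theorem cycleDistGram_posSemidef [Finite κ] : (cycleDistGram n κ).PosSemidef :=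
  posSemidef_sum _ fun w _ => by
    simpa only [star_trivial] using
      posSemidef_vecMulVec_self_star fun p : ZMod n × κ => (cycleDist p.1 w : ℝ)

variable {n κ}

theorem cycleDistGram_apply_self (p : ZMod n × κ) :
    cycleDistGram n κ p p = ∑ v ∈ range n, ((min v (n - v) : ℕ) : ℝ) ^ 2 := by
  simp only [cycleDistGram, Matrix.sum_apply, vecMulVec_apply, ← sq]
  exact sum_comp_cycleDist (fun d => (d : ℝ) ^ 2) p.1

variable [Fintype κ] [DecidableEq κ]

theorem trace_cycleDistGram_mul_edgeLapV (p q : ZMod n × κ) :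
    ((cycleDistGram n κ)ᵀ * edgeLapV p q).trace =
      ∑ w, ((cycleDist p.1 w : ℝ) - cycleDist q.1 w) ^ 2 :=
  trace_transpose_sum_vecMulVec_mul_edgeLapV _ _ p q

theorem trace_cycleDistGram_mul_cycleBlowupLaplacian (hn : Even n) :
    ((cycleDistGram n κ)ᵀ * cycleBlowupLaplacian n κ).trace =
      (n : ℝ) ^ 2 * (Fintype.card κ : ℝ) ^ 2 := by
  have hedge (u : ZMod n) (i j : κ) :
      ((cycleDistGram n κ)ᵀ * edgeLapV (u, i) (u + 1, j)).trace = n := by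
    simp [trace_cycleDistGram_mul_edgeLapV, sq_cycleDist_sub_cycleDist_add_one hn, ZMod.card]
  simp only [cycleBlowupLaplacian, Matrix.mul_sum, trace_sum, hedge, sum_const, card_univ,
    ZMod.card, nsmul_eq_mul]
  ring

theorem trace_cycleDistGram_mul_edgeLapV_antipode (hn : Even n) (u : ZMod n) (i j : κ) :
    ((cycleDistGram n κ)ᵀ * edgeLapV (u, i) (u + ((n / 2 : ℕ) : ZMod n), j)).trace =
      (n : ℝ) ^ 3 / 12 + 2 * n / 3 := by
  rw [trace_cycleDistGram_mul_edgeLapV, sum_sq_cycleDist_sub_cycleDist_antipode hn]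

end Blowup

theorem stmt_15 {n k : ℕ} [NeZero n] (hn : 4 ≤ n) (hneven : Even n) (hk : 1 ≤ k)
    -- the vectors `x_w(u,i) = dist(u,w)` and the matrix `X = Σ_w x_w x_wᵀ`
    (X : Matrix (ZMod n × Fin k) (ZMod n × Fin k) ℝ)
    (hX : X = ∑ w : ZMod n,
      Matrix.vecMulVec (fun p : ZMod n × Fin k => (cycleDist p.1 w : ℝ))
        (fun p : ZMod n × Fin k => (cycleDist p.1 w : ℝ)))
    -- the Laplacian of the ring part `G ∖ e*`: vertices `(u,i)` and `(v,j)` are adjacent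
    -- iff `v = u ± 1 (mod n)`; each such edge is enumerated once as `{(u,i),(u+1,j)}`
    (Lring : Matrix (ZMod n × Fin k) (ZMod n × Fin k) ℝ)
    (hLring : Lring = ∑ u : ZMod n, ∑ i : Fin k, ∑ j : Fin k,
      edgeLapV ((u, i) : ZMod n × Fin k) ((u + 1, j) : ZMod n × Fin k))
    -- the Laplacian of the special edge `e*` joining `(0,1)` and `(n/2,1)`
    (Lstar : Matrix (ZMod n × Fin k) (ZMod n × Fin k) ℝ)
    (hLstar : Lstar = edgeLapV (((0 : ZMod n), ⟨0, hk⟩) : ZMod n × Fin k)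
      ((((n / 2 : ℕ) : ZMod n), ⟨0, hk⟩) : ZMod n × Fin k)) :
    -- (a)
    (X.PosSemidef ∧
      ∀ p : ZMod n × Fin k, X p p = ∑ v ∈ Finset.range n, ((min v (n - v) : ℕ) : ℝ) ^ 2) ∧
    -- (b)
    (Xᵀ * Lring).trace = (n : ℝ) ^ 2 * (k : ℝ) ^ 2 ∧
    -- (c)
    ((n : ℝ) ^ 3 / 24 ≤ (Xᵀ * Lstar).trace ∧
      (24 * (k : ℝ) ^ 2 < (n : ℝ) →
        (1 / 2) * (Xᵀ * (Lring + Lstar)).trace < (Xᵀ * Lstar).trace)) := by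
  obtain rfl : X = cycleDistGram n (Fin k) := hX
  obtain rfl : Lring = cycleBlowupLaplacian n (Fin k) := hLring
  have hring : ((cycleDistGram n (Fin k))ᵀ * cycleBlowupLaplacian n (Fin k)).trace =
      (n : ℝ) ^ 2 * (k : ℝ) ^ 2 := by
    rw [trace_cycleDistGram_mul_cycleBlowupLaplacian hneven, Fintype.card_fin]
  have hstar : (n : ℝ) ^ 3 / 24 ≤ ((cycleDistGram n (Fin k))ᵀ * Lstar).trace := by
    rw [hLstar, ← zero_add ((n / 2 : ℕ) : ZMod n),
      trace_cycleDistGram_mul_edgeLapV_antipode hneven]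
    linarith [show (0 : ℝ) ≤ (n : ℝ) ^ 3 by positivity, n.cast_nonneg (α := ℝ)]
  refine ⟨⟨cycleDistGram_posSemidef n (Fin k), cycleDistGram_apply_self⟩, hring, hstar, fun h => ?_⟩
  have hn_pos : (0 : ℝ) < n := Nat.cast_pos.2 (NeZero.pos n)
  have hring_lt_star : (n : ℝ) ^ 2 * (k : ℝ) ^ 2 < ((cycleDistGram n (Fin k))ᵀ * Lstar).trace :=
    calc (n : ℝ) ^ 2 * (k : ℝ) ^ 2 < (n : ℝ) ^ 2 * (n / 24) :=
          mul_lt_mul_of_pos_left (by linarith) (pow_pos hn_pos 2)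
      _ = (n : ℝ) ^ 3 / 24 := by ring
      _ ≤ _ := hstar
  rw [Matrix.mul_add, trace_add, hring]
  linarith
end
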